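/- arXiv:2004.01218 — 4 statements merged into one kernel-verified Lean document; each statement's English description precedes it below -/
import Mathlib

section
/- Let G be a segregated graph with vertex set V. Let B^{nt}(G) be the collection of non-trivial blocks of G, and let D(G) be the collection of districts of the induced subgraph of G on the vertices lying in no non-trivial block. Then the members of B^{nt}(G) together with the members of D(G) are pairwise disjoint nonempty sets whose union is V; that is, they partition V. In particular, in a segregated graph no vertex of a non-trivial block has an incident bidirected edge. -/
/-- A mixed graph on vertex type `V`: directed (`dir`), undirected (`undir`),
and bidirected (`bidir`) edge relations. -/
structure MixedGraph (V : Type*) where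
  dir : V → V → Prop
  undir : V → V → Prop
  bidir : V → V → Prop

namespace MixedGraph

variable {V : Type*}

/-- The three edge relations are irreflexive, and `undir`, `bidir` are symmetric. -/
def IsMixed (G : MixedGraph V) : Prop :=
  (∀ v, ¬ G.dir v v) ∧ (∀ v, ¬ G.undir v v) ∧ (∀ v, ¬ G.bidir v v) ∧
  (∀ u v, G.undir u v → G.undir v u) ∧ (∀ u v, G.bidir u v → G.bidir v u)

/-- One step of a partially directed path: a directed edge (oriented along the
path) or an undirected edge. -/
def pdStep (G : MixedGraph V) (u v : V) : Prop := G.dir u v ∨ G.undir u v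

/-- A partially directed cycle: `k ≥ 2` distinct vertices arranged cyclically where
each consecutive pair (with wraparound) is joined by a directed edge oriented along
the cycle or by an undirected edge, and at least one of these edges is directed. -/
def HasPDCycle (G : MixedGraph V) : Prop :=
  ∃ (k : ℕ) (f : Fin (k + 2) → V), Function.Injective f ∧
    (∀ i, G.pdStep (f i) (f (i + 1))) ∧ (∃ i, G.dir (f i) (f (i + 1)))

/-- A segregated graph: a mixed graph with no partially directed cycle in which
no vertex has both an incident undirected edge and an incident bidirected edge. -/
def IsSegregated (G : MixedGraph V) : Prop :=
  G.IsMixed ∧ ¬ G.HasPDCycle ∧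
    ∀ v, ¬ ((∃ u, G.undir v u) ∧ (∃ u, G.bidir v u))

/-- The directed edges present after step (i) of the intervention procedure:
for `y ∈ 𝐀` exactly the edges `Z_y → y`; for `y ∉ 𝐀`, the old directed edges into `y`
together with the reorientation `x → y` of old undirected edges `x − y` with `x ∈ 𝐀`. -/
def dirAux (G : MixedGraph V) (A : Set V) (Z : V → Set V) (x y : V) : Prop :=
  (y ∈ A ∧ x ∈ Z y) ∨ (y ∉ A ∧ (G.dir x y ∨ (G.undir x y ∧ x ∈ A)))

/-- The intervened graph `G_{f𝐀}`: step (i) as encoded by `dirAux` (undirected and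
bidirected edges incident to `𝐀` are removed/reoriented), followed by step (ii),
which replaces each pair of mutual directed edges by a single undirected edge. -/
def intervene (G : MixedGraph V) (A : Set V) (Z : V → Set V) : MixedGraph V where
  dir x y := G.dirAux A Z x y ∧ ¬ G.dirAux A Z y x
  undir x y := (G.undir x y ∧ x ∉ A ∧ y ∉ A) ∨ (G.dirAux A Z x y ∧ G.dirAux A Z y x)
  bidir x y := G.bidir x y ∧ x ∉ A ∧ y ∉ A

/-- The exterior of `x`: vertices reachable from `x` by a partially directed path. -/
def ext (G : MixedGraph V) (x : V) : Set V := {w | Relation.ReflTransGen G.pdStep x w}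

/-- Vertices joined to `x` by a path of undirected edges (including `x` itself). -/
def undirConn (G : MixedGraph V) (x : V) : Set V := {w | Relation.ReflTransGen G.undir x w}

/-- The strict exterior of `x`: the exterior with `x` and everything joined to `x`
by a path of undirected edges removed. -/
def strictExt (G : MixedGraph V) (x : V) : Set V := G.ext x \ G.undirConn x

/-- The intervention `(𝐀, (Z_A))` is segregation preserving: (a) each `Z_A` avoids the
strict exterior of `A` in `G`; (b) if distinct `A_i, A_j ∈ 𝐀` each lie on a partially
directed path from the other in `G_{f𝐀}`, then `A_i ∈ Z_{A_j}` and `A_j ∈ Z_{A_i}`. -/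
def SegregationPreserving (G : MixedGraph V) (A : Set V) (Z : V → Set V) : Prop :=
  (∀ a ∈ A, Z a ⊆ (G.strictExt a)ᶜ) ∧
  ∀ ai ∈ A, ∀ aj ∈ A, ai ≠ aj →
    aj ∈ (G.intervene A Z).ext ai → ai ∈ (G.intervene A Z).ext aj →
    ai ∈ Z aj ∧ aj ∈ Z ai

/-- The induced subgraph `G_S`: keeps exactly those edges with both endpoints in `S`. -/
def induce (G : MixedGraph V) (S : Set V) : MixedGraph V where
  dir x y := G.dir x y ∧ x ∈ S ∧ y ∈ S
  undir x y := G.undir x y ∧ x ∈ S ∧ y ∈ S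
  bidir x y := G.bidir x y ∧ x ∈ S ∧ y ∈ S

/-- The block of `v`: the connected component of `v` under the undirected-edge relation. -/
def block (G : MixedGraph V) (v : V) : Set V := {w | Relation.ReflTransGen G.undir v w}

/-- The district of `v`: the connected component of `v` under the bidirected-edge relation. -/
def district (G : MixedGraph V) (v : V) : Set V := {w | Relation.ReflTransGen G.bidir v w}

/-- The non-trivial blocks of `G`: blocks with at least two vertices. -/
def ntBlocks (G : MixedGraph V) : Set (Set V) :=
  {B | (∃ v, B = G.block v) ∧ B.Nontrivial}

/-- The vertices lying in some non-trivial block of `G`. -/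
def blockVerts (G : MixedGraph V) : Set V := ⋃₀ G.ntBlocks

/-- The districts of the induced subgraph of `G` on the vertices lying in no
non-trivial block. -/
def restDistricts (G : MixedGraph V) : Set (Set V) :=
  {D | ∃ v ∈ G.blockVertsᶜ, D = (G.induce G.blockVertsᶜ).district v}

/-- The anterior of `Y`: `Y` together with all vertices having a partially directed
path into some member of `Y`. -/
def anterior (G : MixedGraph V) (Y : Set V) : Set V :=
  {x | ∃ y ∈ Y, Relation.ReflTransGen G.pdStep x y}

end MixedGraph

theorem reach_symm_aux {V : Type*} {r : V → V → Prop} (hr : ∀ u v, r u v → r v u) {a b : V}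
    (h : Relation.ReflTransGen r a b) : Relation.ReflTransGen r b a := by
  induction h with
  | refl => exact Relation.ReflTransGen.refl
  | tail _ h2 ih => exact Relation.ReflTransGen.head (hr _ _ h2) ih

theorem comp_disjoint_aux {V : Type*} {r : V → V → Prop} (hr : ∀ u v, r u v → r v u) (a b : V)
    (hne : {w | Relation.ReflTransGen r a w} ≠ {w | Relation.ReflTransGen r b w}) :
    Disjoint {w | Relation.ReflTransGen r a w} {w | Relation.ReflTransGen r b w} := by
  rw [Set.disjoint_left]
  intro x hx hy
  apply hne
  have hx' : Relation.ReflTransGen r a x := hx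
  have hy' : Relation.ReflTransGen r b x := hy
  ext w
  exact ⟨fun h => (hy'.trans (reach_symm_aux hr hx')).trans h,
    fun h => (hx'.trans (reach_symm_aux hr hy')).trans h⟩

theorem rest_subset_aux {V : Type*} (G : MixedGraph V) {D : Set V} (hD : D ∈ G.restDistricts) :
    D ⊆ G.blockVertsᶜ := by
  obtain ⟨v, hv, rfl⟩ := hD
  intro w hw
  have hw' : Relation.ReflTransGen (G.induce G.blockVertsᶜ).bidir v w := hw
  rcases Relation.ReflTransGen.cases_tail hw' with h | ⟨c, _, h⟩
  · rw [h]; exact hv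
  · exact h.2.2

/-- In a segregated graph, the non-trivial blocks together with the
districts of the induced subgraph on the vertices lying in no non-trivial block are
pairwise disjoint nonempty sets whose union is the whole vertex set. In particular,
no vertex of a non-trivial block has an incident bidirected edge. -/
theorem segregated_partition {V : Type*} [Fintype V]
    (G : MixedGraph V) (hG : G.IsSegregated) :
    (∀ S ∈ G.ntBlocks ∪ G.restDistricts, S.Nonempty) ∧
    (∀ S ∈ G.ntBlocks ∪ G.restDistricts, ∀ T ∈ G.ntBlocks ∪ G.restDistricts,
      S ≠ T → Disjoint S T) ∧
    ⋃₀ (G.ntBlocks ∪ G.restDistricts) = Set.univ ∧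
    (∀ v ∈ G.blockVerts, ¬ ∃ w, G.bidir v w) := by
  obtain ⟨⟨_, _, _, hu, hb⟩, _, hs⟩ := hG
  have hbr : ∀ u v, (G.induce G.blockVertsᶜ).bidir u v → (G.induce G.blockVertsᶜ).bidir v u :=
    fun u v h => ⟨hb _ _ h.1, h.2.2, h.2.1⟩
  have hcross : ∀ S ∈ G.ntBlocks, ∀ T ∈ G.restDistricts, Disjoint S T := by
    intro S hS T hT
    rw [Set.disjoint_left]
    intro x hx hy
    exact rest_subset_aux G hT hy ⟨S, hS, hx⟩
  refine ⟨?_, ?_, ?_, ?_⟩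
  · rintro S (⟨_, h⟩ | ⟨v, _, rfl⟩)
    · exact h.nonempty
    · exact ⟨v, Relation.ReflTransGen.refl⟩
  · rintro S (hS | hS) T (hT | hT) hne
    · obtain ⟨⟨a, rfl⟩, _⟩ := hS
      obtain ⟨⟨b, rfl⟩, _⟩ := hT
      exact comp_disjoint_aux hu a b hne
    · exact hcross S hS T hT
    · exact (hcross T hT S hS).symm
    · obtain ⟨a, _, rfl⟩ := hS
      obtain ⟨b, _, rfl⟩ := hT
      exact comp_disjoint_aux hbr a b hne
  · apply Set.eq_univ_of_forall
    intro v
    by_cases hv : v ∈ G.blockVerts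
    · obtain ⟨S, hS, hvS⟩ := hv
      exact ⟨S, Or.inl hS, hvS⟩
    · exact ⟨_, Or.inr ⟨v, hv, rfl⟩, Relation.ReflTransGen.refl⟩
  · rintro v ⟨S, ⟨⟨a, rfl⟩, hnt⟩, hv⟩ hw
    obtain ⟨y, hy, hyv⟩ := hnt.exists_ne v
    have h1 : Relation.ReflTransGen G.undir v y := (reach_symm_aux hu hv).trans hy
    rcases Relation.ReflTransGen.cases_head h1 with h | ⟨c, hc, _⟩
    · exact hyv h.symm
    · exact hs v ⟨⟨c, hc⟩, hw⟩
end

section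
/- Front-door identification. Let C, H, A, M, Y range over finite nonempty sets and suppose the joint pmf of (C, H, A, M, Y) factorizes as p(c,h,a,m,y) = p_C(c)·p_H(h)·p_A(a | c,h)·p_M(m | a,c)·p_Y(y | m,c,h), where each factor is a pmf in its leading argument for every value of its conditioning arguments and all factor values are strictly positive. Fix a₀ and define the interventional pmf p_{a₀}(c,h,m,y) = p_C(c)·p_H(h)·p_M(m | a₀,c)·p_Y(y | m,c,h). Then for every y, Σ_{c,h,m} p_{a₀}(c,h,m,y) = Σ_{m,c} P(M=m | A=a₀, C=c) · P(C=c) · Σ_{a'} P(Y=y | M=m, C=c, A=a') · P(A=a' | C=c), where all probabilities P(· | ·) are marginal and conditional probabilities computed from the observed joint pmf p by summation and ratios. -/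
/-- front-door identification: if the joint pmf of `(C, H, A, M, Y)`
factorizes as `p(c,h,a,m,y) = p_C(c)·p_H(h)·p_A(a|c,h)·p_M(m|a,c)·p_Y(y|m,c,h)` with
strictly positive factors, each a pmf in its leading argument, then for every `y` the
interventional probability `Σ_{c,h,m} p_{a₀}(c,h,m,y)` (where
`p_{a₀}(c,h,m,y) = p_C(c)·p_H(h)·p_M(m|a₀,c)·p_Y(y|m,c,h)`) equals the front-door
functional `Σ_{m,c} P(M=m|A=a₀,C=c)·P(C=c)·Σ_{a'} P(Y=y|M=m,C=c,A=a')·P(A=a'|C=c)`,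
with all probabilities computed from the observed joint `p` by summation and ratios. -/
theorem frontdoor_identification
    {C H A M Y : Type} [Fintype C] [Fintype H] [Fintype A] [Fintype M] [Fintype Y]
    [Nonempty C] [Nonempty H] [Nonempty A] [Nonempty M] [Nonempty Y]
    (pC : C → ℝ) (pH : H → ℝ) (pA : A → C → H → ℝ)
    (pM : M → A → C → ℝ) (pY : Y → M → C → H → ℝ)
    (p : C → H → A → M → Y → ℝ)
    (hp : ∀ c h a m y, p c h a m y = pC c * pH h * pA a c h * pM m a c * pY y m c h)
    (hCpos : ∀ c, 0 < pC c) (hHpos : ∀ h, 0 < pH h)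
    (hApos : ∀ a c h, 0 < pA a c h) (hMpos : ∀ m a c, 0 < pM m a c)
    (hYpos : ∀ y m c h, 0 < pY y m c h)
    (hCsum : ∑ c, pC c = 1) (hHsum : ∑ h, pH h = 1)
    (hAsum : ∀ c h, ∑ a, pA a c h = 1)
    (hMsum : ∀ a c, ∑ m, pM m a c = 1)
    (hYsum : ∀ m c h, ∑ y, pY y m c h = 1)
    (a₀ : A) :
    ∀ y : Y,
      (∑ c, ∑ h, ∑ m, pC c * pH h * pM m a₀ c * pY y m c h) =
        ∑ m, ∑ c,
          -- P(M = m | A = a₀, C = c)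
          ((∑ h, ∑ y', p c h a₀ m y') / (∑ h, ∑ m', ∑ y', p c h a₀ m' y')) *
            -- P(C = c)
            (∑ h, ∑ a, ∑ m', ∑ y', p c h a m' y') *
            (∑ a',
              -- P(Y = y | M = m, C = c, A = a')
              ((∑ h, p c h a' m y) / (∑ h, ∑ y', p c h a' m y')) *
                -- P(A = a' | C = c)
                ((∑ h, ∑ m', ∑ y', p c h a' m' y') /
                  (∑ h, ∑ a, ∑ m', ∑ y', p c h a m' y'))) := by
  intro y
  have hq : ∀ a c, 0 < ∑ h, pH h * pA a c h := fun a c =>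
    Finset.sum_pos (fun h _ => mul_pos (hHpos h) (hApos a c h)) Finset.univ_nonempty
  have e0 : ∀ c h a m, ∑ y', p c h a m y' = pC c * pH h * pA a c h * pM m a c := by
    intro c h a m
    simp only [hp]
    rw [← Finset.mul_sum, hYsum, mul_one]
  have e0' : ∀ c h a, ∑ m', ∑ y', p c h a m' y' = pC c * pH h * pA a c h := by
    intro c h a
    simp only [e0]
    rw [← Finset.mul_sum, hMsum, mul_one]
  have e1 : ∀ c a m, ∑ h, ∑ y', p c h a m y' =
      pC c * pM m a c * ∑ h, pH h * pA a c h := by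
    intro c a m
    simp only [e0]
    rw [Finset.mul_sum]
    exact Finset.sum_congr rfl fun h _ => by ring
  have e2 : ∀ c a, ∑ h, ∑ m', ∑ y', p c h a m' y' = pC c * ∑ h, pH h * pA a c h := by
    intro c a
    simp only [e0']
    rw [Finset.mul_sum]
    exact Finset.sum_congr rfl fun h _ => by ring
  have e3 : ∀ c, ∑ h, ∑ a, ∑ m', ∑ y', p c h a m' y' = pC c := by
    intro c
    simp only [e0', ← Finset.mul_sum, hAsum, mul_one, hHsum]
  have e4 : ∀ c a m, ∑ h, p c h a m y =
      pC c * pM m a c * ∑ h, pH h * pA a c h * pY y m c h := by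
    intro c a m
    simp only [hp]
    rw [Finset.mul_sum]
    exact Finset.sum_congr rfl fun h _ => by ring
  have e5 : ∀ c m, ∑ a, ∑ h, pH h * pA a c h * pY y m c h = ∑ h, pH h * pY y m c h := by
    intro c m
    rw [Finset.sum_comm]
    refine Finset.sum_congr rfl fun h _ => ?_
    rw [← Finset.sum_mul, ← Finset.mul_sum, hAsum, mul_one]
  simp only [e1, e2, e3, e4]
  rw [Finset.sum_comm (s := (Finset.univ : Finset M))]
  refine Finset.sum_congr rfl fun c _ => ?_
  rw [Finset.sum_comm]
  refine Finset.sum_congr rfl fun m _ => ?_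
  have hc := (hCpos c).ne'
  have f1 : pC c * pM m a₀ c * (∑ h, pH h * pA a₀ c h) / (pC c * ∑ h, pH h * pA a₀ c h)
      = pM m a₀ c := by
    have := (hq a₀ c).ne'
    field_simp
  have f2 : ∀ a, pC c * pM m a c * (∑ h, pH h * pA a c h * pY y m c h) /
      (pC c * pM m a c * ∑ h, pH h * pA a c h) * ((pC c * ∑ h, pH h * pA a c h) / pC c)
      = ∑ h, pH h * pA a c h * pY y m c h := by
    intro a
    have h1 := (hq a c).ne'
    have h2 := (hMpos m a c).ne'
    generalize (∑ h, pH h * pA a c h * pY y m c h) = r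
    generalize (∑ h, pH h * pA a c h) = q at *
    field_simp
  rw [f1]
  simp only [f2]
  rw [e5, Finset.mul_sum]
  exact Finset.sum_congr rfl fun h _ => by ring
end

section
/- Node-intervention identification in the two-candidate segregated-graph model. Let H_l, H_r, C_l, C_r, A_l, A_r, Y_l, Y_r range over finite nonempty sets and suppose the joint pmf factorizes as p = p_{H_l}(h_l)·p_{H_r}(h_r)·p_{C_l}(c_l | h_l)·p_{C_r}(c_r | h_r)·p_{A_l}(a_l | c_l,c_r,h_l)·p_{A_r}(a_r | c_l,c_r,h_r)·p_Y(y_l,y_r | c_l,c_r,a_l,a_r), where each factor is a pmf in its leading argument(s) for every value of its conditioning arguments and all factor values are strictly positive. Fix a value a of A_l and define the interventional pmf p_a(h_l,h_r,c_l,c_r,a_r,y_l,y_r) by deleting the factor p_{A_l} and evaluating the remaining factors at A_l = a. Then for every y_l, Σ (over all other variables) of p_a equals Σ_{c_l,c_r,a_r,y_r} P(Y_l=y_l, Y_r=y_r | C_l=c_l, C_r=c_r, A_r=a_r, A_l=a) · P(A_r=a_r | C_l=c_l, C_r=c_r) · P(C_l=c_l) · P(C_r=c_r), where all probabilities P(·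 | ·) are computed from the observed joint pmf p. -/
/-- node-intervention identification in the two-candidate
segregated-graph model: if the joint pmf factorizes as
`p = p_{H_l}(h_l)·p_{H_r}(h_r)·p_{C_l}(c_l|h_l)·p_{C_r}(c_r|h_r)·
p_{A_l}(a_l|c_l,c_r,h_l)·p_{A_r}(a_r|c_l,c_r,h_r)·p_Y(y_l,y_r|c_l,c_r,a_l,a_r)`
with strictly positive factors, each a pmf in its leading argument(s), then for every
`y_l` the interventional probability (summing the truncated factorization `p_a`, with
the `p_{A_l}` factor deleted and `A_l = a`, over all other variables) equals
`Σ_{c_l,c_r,a_r,y_r} P(Y_l=y_l,Y_r=y_r|C_l=c_l,C_r=c_r,A_r=a_r,A_l=a) ·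
P(A_r=a_r|C_l=c_l,C_r=c_r) · P(C_l=c_l) · P(C_r=c_r)`, with all probabilities computed
from the observed joint `p`. -/
theorem node_intervention_identification
    {Hl Hr Cl Cr Al Ar Yl Yr : Type}
    [Fintype Hl] [Fintype Hr] [Fintype Cl] [Fintype Cr]
    [Fintype Al] [Fintype Ar] [Fintype Yl] [Fintype Yr]
    [Nonempty Hl] [Nonempty Hr] [Nonempty Cl] [Nonempty Cr]
    [Nonempty Al] [Nonempty Ar] [Nonempty Yl] [Nonempty Yr]
    (pHl : Hl → ℝ) (pHr : Hr → ℝ) (pCl : Cl → Hl → ℝ) (pCr : Cr → Hr → ℝ)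
    (pAl : Al → Cl → Cr → Hl → ℝ) (pAr : Ar → Cl → Cr → Hr → ℝ)
    (pY : Yl → Yr → Cl → Cr → Al → Ar → ℝ)
    (p : Hl → Hr → Cl → Cr → Al → Ar → Yl → Yr → ℝ)
    (hp : ∀ hl hr cl cr al ar yl yr,
      p hl hr cl cr al ar yl yr =
        pHl hl * pHr hr * pCl cl hl * pCr cr hr * pAl al cl cr hl *
          pAr ar cl cr hr * pY yl yr cl cr al ar)
    (hHlpos : ∀ hl, 0 < pHl hl) (hHrpos : ∀ hr, 0 < pHr hr)
    (hClpos : ∀ cl hl, 0 < pCl cl hl) (hCrpos : ∀ cr hr, 0 < pCr cr hr)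
    (hAlpos : ∀ al cl cr hl, 0 < pAl al cl cr hl)
    (hArpos : ∀ ar cl cr hr, 0 < pAr ar cl cr hr)
    (hYpos : ∀ yl yr cl cr al ar, 0 < pY yl yr cl cr al ar)
    (hHlsum : ∑ hl, pHl hl = 1) (hHrsum : ∑ hr, pHr hr = 1)
    (hClsum : ∀ hl, ∑ cl, pCl cl hl = 1) (hCrsum : ∀ hr, ∑ cr, pCr cr hr = 1)
    (hAlsum : ∀ cl cr hl, ∑ al, pAl al cl cr hl = 1)
    (hArsum : ∀ cl cr hr, ∑ ar, pAr ar cl cr hr = 1)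
    (hYsum : ∀ cl cr al ar, ∑ yl, ∑ yr, pY yl yr cl cr al ar = 1)
    (a : Al) :
    ∀ yl : Yl,
      (∑ hl, ∑ hr, ∑ cl, ∑ cr, ∑ ar, ∑ yr,
          pHl hl * pHr hr * pCl cl hl * pCr cr hr * pAr ar cl cr hr *
            pY yl yr cl cr a ar) =
        ∑ cl, ∑ cr, ∑ ar, ∑ yr,
          -- P(Y_l = y_l, Y_r = y_r | C_l = c_l, C_r = c_r, A_r = a_r, A_l = a)
          ((∑ hl, ∑ hr, p hl hr cl cr a ar yl yr) /
              (∑ hl, ∑ hr, ∑ yl', ∑ yr', p hl hr cl cr a ar yl' yr')) *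
            -- P(A_r = a_r | C_l = c_l, C_r = c_r)
            ((∑ hl, ∑ hr, ∑ al, ∑ yl', ∑ yr', p hl hr cl cr al ar yl' yr') /
              (∑ hl, ∑ hr, ∑ al, ∑ ar', ∑ yl', ∑ yr', p hl hr cl cr al ar' yl' yr')) *
            -- P(C_l = c_l)
            (∑ hl, ∑ hr, ∑ cr', ∑ al, ∑ ar', ∑ yl', ∑ yr',
              p hl hr cl cr' al ar' yl' yr') *
            -- P(C_r = c_r)
            (∑ hl, ∑ hr, ∑ cl', ∑ al, ∑ ar', ∑ yl', ∑ yr',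
              p hl hr cl' cr al ar' yl' yr') := by
  intro yl
  have prod2 : ∀ (f : Hl → ℝ) (g : Hr → ℝ), ∑ hl, ∑ hr, f hl * g hr = (∑ hl, f hl) * ∑ hr, g hr :=
    fun f g => (Finset.sum_mul_sum _ _ _ _).symm
  -- summing out the outcomes
  have hY : ∀ hl hr cl cr al ar, ∑ yl', ∑ yr', p hl hr cl cr al ar yl' yr' =
      pHl hl * pHr hr * pCl cl hl * pCr cr hr * pAl al cl cr hl * pAr ar cl cr hr := by
    intro hl hr cl cr al ar
    simp_rw [hp, ← Finset.mul_sum, hYsum, mul_one]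
  have hA : ∀ hl hr cl cr, ∑ al, ∑ ar', ∑ yl', ∑ yr', p hl hr cl cr al ar' yl' yr' =
      pHl hl * pHr hr * pCl cl hl * pCr cr hr := by
    intro hl hr cl cr
    simp_rw [hY, ← Finset.mul_sum, hArsum, mul_one, ← Finset.mul_sum, hAlsum, mul_one]
  -- the marginals
  have m1 : ∀ cl cr ar yr, ∑ hl, ∑ hr, p hl hr cl cr a ar yl yr =
      (∑ hl, pHl hl * pCl cl hl * pAl a cl cr hl) * (∑ hr, pHr hr * pCr cr hr * pAr ar cl cr hr) *
        pY yl yr cl cr a ar := by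
    intro cl cr ar yr
    rw [← prod2]
    simp_rw [Finset.sum_mul, hp]
    exact Finset.sum_congr rfl fun _ _ => Finset.sum_congr rfl fun _ _ => by ring
  have m2 : ∀ cl cr ar, ∑ hl, ∑ hr, ∑ yl', ∑ yr', p hl hr cl cr a ar yl' yr' =
      (∑ hl, pHl hl * pCl cl hl * pAl a cl cr hl) *
        (∑ hr, pHr hr * pCr cr hr * pAr ar cl cr hr) := by
    intro cl cr ar
    rw [← prod2]
    simp_rw [hY]
    exact Finset.sum_congr rfl fun _ _ => Finset.sum_congr rfl fun _ _ => by ring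
  have m3 : ∀ cl cr ar, ∑ hl, ∑ hr, ∑ al, ∑ yl', ∑ yr', p hl hr cl cr al ar yl' yr' =
      (∑ hl, pHl hl * pCl cl hl) * (∑ hr, pHr hr * pCr cr hr * pAr ar cl cr hr) := by
    intro cl cr ar
    rw [← prod2]
    simp_rw [hY, ← Finset.sum_mul, ← Finset.mul_sum, hAlsum]
    exact Finset.sum_congr rfl fun _ _ => by
      rw [Finset.mul_sum]
      exact Finset.sum_congr rfl fun _ _ => by ring
  have m4 : ∀ cl cr, ∑ hl, ∑ hr, ∑ al, ∑ ar', ∑ yl', ∑ yr', p hl hr cl cr al ar' yl' yr' =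
      (∑ hl, pHl hl * pCl cl hl) * (∑ hr, pHr hr * pCr cr hr) := by
    intro cl cr
    rw [← prod2]
    simp_rw [hA]
    exact Finset.sum_congr rfl fun _ _ => Finset.sum_congr rfl fun _ _ => by ring
  have m5 : ∀ cl, ∑ hl, ∑ hr, ∑ cr', ∑ al, ∑ ar', ∑ yl', ∑ yr',
      p hl hr cl cr' al ar' yl' yr' = ∑ hl, pHl hl * pCl cl hl := by
    intro cl
    rw [← mul_one (∑ hl, pHl hl * pCl cl hl), ← hHrsum, ← prod2]
    simp_rw [hA, ← Finset.mul_sum, hCrsum]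
    exact Finset.sum_congr rfl fun _ _ => by
      rw [Finset.mul_sum]
      exact Finset.sum_congr rfl fun _ _ => by ring
  have m6 : ∀ cr, ∑ hl, ∑ hr, ∑ cl', ∑ al, ∑ ar', ∑ yl', ∑ yr',
      p hl hr cl' cr al ar' yl' yr' = ∑ hr, pHr hr * pCr cr hr := by
    intro cr
    rw [← one_mul (∑ hr, pHr hr * pCr cr hr), ← hHlsum, ← prod2]
    simp_rw [hA, ← Finset.sum_mul, ← Finset.mul_sum, hClsum]
    exact Finset.sum_congr rfl fun _ _ => by
      rw [Finset.mul_sum]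
      exact Finset.sum_congr rfl fun _ _ => by ring
  simp_rw [m1, m2, m3, m4, m5, m6]
  -- reorder the left-hand side
  have lhs : (∑ hl, ∑ hr, ∑ cl, ∑ cr, ∑ ar, ∑ yr,
          pHl hl * pHr hr * pCl cl hl * pCr cr hr * pAr ar cl cr hr * pY yl yr cl cr a ar) =
      ∑ cl, ∑ cr, ∑ ar, ∑ yr, ∑ hl, ∑ hr,
          pHl hl * pHr hr * pCl cl hl * pCr cr hr * pAr ar cl cr hr * pY yl yr cl cr a ar := by
    have sw : ∀ (H : Type) [Fintype H] (F : H → Cl → Cr → Ar → Yr → ℝ),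
        ∑ h, ∑ cl, ∑ cr, ∑ ar, ∑ yr, F h cl cr ar yr =
          ∑ cl, ∑ cr, ∑ ar, ∑ yr, ∑ h, F h cl cr ar yr := by
      intro H _ F
      rw [Finset.sum_comm]
      refine Finset.sum_congr rfl fun cl _ => ?_
      rw [Finset.sum_comm]
      refine Finset.sum_congr rfl fun cr _ => ?_
      rw [Finset.sum_comm]
      refine Finset.sum_congr rfl fun ar _ => ?_
      rw [Finset.sum_comm]
    rw [← sw Hl]
    exact Finset.sum_congr rfl fun hl _ => sw Hr _
  rw [lhs]
  refine Finset.sum_congr rfl fun cl _ => Finset.sum_congr rfl fun cr _ =>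
    Finset.sum_congr rfl fun ar _ => Finset.sum_congr rfl fun yr _ => ?_
  have h1 : 0 < ∑ hl, pHl hl * pCl cl hl * pAl a cl cr hl :=
    Finset.sum_pos (fun hl _ => mul_pos (mul_pos (hHlpos _) (hClpos _ _)) (hAlpos _ _ _ _))
      Finset.univ_nonempty
  have h2 : 0 < ∑ hr, pHr hr * pCr cr hr * pAr ar cl cr hr :=
    Finset.sum_pos (fun hr _ => mul_pos (mul_pos (hHrpos _) (hCrpos _ _)) (hArpos _ _ _ _))
      Finset.univ_nonempty
  have h3 : 0 < ∑ hl, pHl hl * pCl cl hl :=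
    Finset.sum_pos (fun hl _ => mul_pos (hHlpos _) (hClpos _ _)) Finset.univ_nonempty
  have h4 : 0 < ∑ hr, pHr hr * pCr cr hr :=
    Finset.sum_pos (fun hr _ => mul_pos (hHrpos _) (hCrpos _ _)) Finset.univ_nonempty
  have e : (∑ hl, ∑ hr,
      pHl hl * pHr hr * pCl cl hl * pCr cr hr * pAr ar cl cr hr * pY yl yr cl cr a ar) =
      (∑ hl, pHl hl * pCl cl hl) * (∑ hr, pHr hr * pCr cr hr * pAr ar cl cr hr) *
        pY yl yr cl cr a ar := by
    rw [← prod2]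
    simp_rw [Finset.sum_mul]
    exact Finset.sum_congr rfl fun _ _ => Finset.sum_congr rfl fun _ _ => by ring
  rw [e]
  generalize (∑ hl, pHl hl * pCl cl hl * pAl a cl cr hl) = x1 at *
  generalize (∑ hr, pHr hr * pCr cr hr * pAr ar cl cr hr) = x2 at *
  generalize (∑ hl, pHl hl * pCl cl hl) = x3 at *
  generalize (∑ hr, pHr hr * pCr cr hr) = x4 at *
  field_simp
end

section
/- Policy-intervention identification in the two-candidate segregated-graph model. Let H_l, H_r, C_l, C_r, A_l, A_r, Y_l, Y_r range over finite nonempty sets and suppose the joint pmf factorizes as p = p_{H_l}(h_l)·p_{H_r}(h_r)·p_{C_l}(c_l | h_l)·p_{C_r}(c_r | h_r)·p_{A_l}(a_l | c_l,c_r,h_l)·p_{A_r}(a_r | c_l,c_r,h_r)·p_Y(y_l,y_r | c_l,c_r,a_l,a_r), where each factor is a pmf in its leading argument(s) for every value of its conditioning arguments and all factor values are strictly positive. Let f : C_l × C_r → A_l be any function (a deterministic treatment policy for A_l). Define the interventional pmf p_f(h_l,h_r,c_l,c_r,a_r,y_l,y_r) by deleting the factor p_{A_l} and evaluating the remaining factors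 at A_l = f(c_l,c_r). Then for every y_l, Σ (over all other variables) of p_f equals Σ_{c_l,c_r,a_r,y_r} P(Y_l=y_l, Y_r=y_r | C_l=c_l, C_r=c_r, A_r=a_r, A_l=f(c_l,c_r)) · P(A_r=a_r | C_l=c_l, C_r=c_r) · P(C_l=c_l) · P(C_r=c_r), where all probabilities P(· | ·) are computed from the observed joint pmf p. -/
theorem sum_swap_aux {A B C D E F : Type} [Fintype A] [Fintype B] [Fintype C] [Fintype D]
    [Fintype E] [Fintype F] (g : A → B → C → D → E → F → ℝ) :
    ∑ a, ∑ b, ∑ c, ∑ d, ∑ e, ∑ x, g a b c d e x =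
      ∑ c, ∑ d, ∑ e, ∑ x, ∑ a, ∑ b, g a b c d e x := by
  have h1 : ∑ a, ∑ b, ∑ c, ∑ d, ∑ e, ∑ x, g a b c d e x =
      ∑ u : A × B, ∑ v : C × D × E × F, g u.1 u.2 v.1 v.2.1 v.2.2.1 v.2.2.2 := by
    simp only [Fintype.sum_prod_type]
  rw [h1, Finset.sum_comm]
  simp only [Fintype.sum_prod_type]


/-- policy-intervention identification in the two-candidate
segregated-graph model: if the joint pmf factorizes as
`p = p_{H_l}(h_l)·p_{H_r}(h_r)·p_{C_l}(c_l|h_l)·p_{C_r}(c_r|h_r)·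
p_{A_l}(a_l|c_l,c_r,h_l)·p_{A_r}(a_r|c_l,c_r,h_r)·p_Y(y_l,y_r|c_l,c_r,a_l,a_r)`
with strictly positive factors, each a pmf in its leading argument(s), and
`f : C_l × C_r → A_l` is any deterministic treatment policy, then for every `y_l` the
interventional probability (summing the truncated factorization `p_f`, with the
`p_{A_l}` factor deleted and `A_l = f(c_l,c_r)`, over all other variables) equals
`Σ_{c_l,c_r,a_r,y_r} P(Y_l=y_l,Y_r=y_r|C_l=c_l,C_r=c_r,A_r=a_r,A_l=f(c_l,c_r)) ·
P(A_r=a_r|C_l=c_l,C_r=c_r) · P(C_l=c_l) · P(C_r=c_r)`, with all probabilities computed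
from the observed joint `p`. -/
theorem policy_intervention_identification
    {Hl Hr Cl Cr Al Ar Yl Yr : Type}
    [Fintype Hl] [Fintype Hr] [Fintype Cl] [Fintype Cr]
    [Fintype Al] [Fintype Ar] [Fintype Yl] [Fintype Yr]
    [Nonempty Hl] [Nonempty Hr] [Nonempty Cl] [Nonempty Cr]
    [Nonempty Al] [Nonempty Ar] [Nonempty Yl] [Nonempty Yr]
    (pHl : Hl → ℝ) (pHr : Hr → ℝ) (pCl : Cl → Hl → ℝ) (pCr : Cr → Hr → ℝ)
    (pAl : Al → Cl → Cr → Hl → ℝ) (pAr : Ar → Cl → Cr → Hr → ℝ)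
    (pY : Yl → Yr → Cl → Cr → Al → Ar → ℝ)
    (p : Hl → Hr → Cl → Cr → Al → Ar → Yl → Yr → ℝ)
    (hp : ∀ hl hr cl cr al ar yl yr,
      p hl hr cl cr al ar yl yr =
        pHl hl * pHr hr * pCl cl hl * pCr cr hr * pAl al cl cr hl *
          pAr ar cl cr hr * pY yl yr cl cr al ar)
    (hHlpos : ∀ hl, 0 < pHl hl) (hHrpos : ∀ hr, 0 < pHr hr)
    (hClpos : ∀ cl hl, 0 < pCl cl hl) (hCrpos : ∀ cr hr, 0 < pCr cr hr)
    (hAlpos : ∀ al cl cr hl, 0 < pAl al cl cr hl)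
    (hArpos : ∀ ar cl cr hr, 0 < pAr ar cl cr hr)
    (hYpos : ∀ yl yr cl cr al ar, 0 < pY yl yr cl cr al ar)
    (hHlsum : ∑ hl, pHl hl = 1) (hHrsum : ∑ hr, pHr hr = 1)
    (hClsum : ∀ hl, ∑ cl, pCl cl hl = 1) (hCrsum : ∀ hr, ∑ cr, pCr cr hr = 1)
    (hAlsum : ∀ cl cr hl, ∑ al, pAl al cl cr hl = 1)
    (hArsum : ∀ cl cr hr, ∑ ar, pAr ar cl cr hr = 1)
    (hYsum : ∀ cl cr al ar, ∑ yl, ∑ yr, pY yl yr cl cr al ar = 1)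
    (f : Cl → Cr → Al) :
    ∀ yl : Yl,
      (∑ hl, ∑ hr, ∑ cl, ∑ cr, ∑ ar, ∑ yr,
          pHl hl * pHr hr * pCl cl hl * pCr cr hr * pAr ar cl cr hr *
            pY yl yr cl cr (f cl cr) ar) =
        ∑ cl, ∑ cr, ∑ ar, ∑ yr,
          -- P(Y_l = y_l, Y_r = y_r | C_l = c_l, C_r = c_r, A_r = a_r, A_l = f(c_l,c_r))
          ((∑ hl, ∑ hr, p hl hr cl cr (f cl cr) ar yl yr) /
              (∑ hl, ∑ hr, ∑ yl', ∑ yr', p hl hr cl cr (f cl cr) ar yl' yr')) *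
            -- P(A_r = a_r | C_l = c_l, C_r = c_r)
            ((∑ hl, ∑ hr, ∑ al, ∑ yl', ∑ yr', p hl hr cl cr al ar yl' yr') /
              (∑ hl, ∑ hr, ∑ al, ∑ ar', ∑ yl', ∑ yr', p hl hr cl cr al ar' yl' yr')) *
            -- P(C_l = c_l)
            (∑ hl, ∑ hr, ∑ cr', ∑ al, ∑ ar', ∑ yl', ∑ yr',
              p hl hr cl cr' al ar' yl' yr') *
            -- P(C_r = c_r)
            (∑ hl, ∑ hr, ∑ cl', ∑ al, ∑ ar', ∑ yl', ∑ yr',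
              p hl hr cl' cr al ar' yl' yr') := by
  intro yl
  have fac : ∀ (u : Hl → ℝ) (v : Hr → ℝ), ∑ hl, ∑ hr, u hl * v hr = (∑ hl, u hl) * ∑ hr, v hr :=
    fun u v => (Finset.sum_mul_sum _ _ _ _).symm
  have e0 : ∀ hl hr cl cr al ar, ∑ yl', ∑ yr', p hl hr cl cr al ar yl' yr' =
      (pHl hl * pCl cl hl * pAl al cl cr hl) * (pHr hr * pCr cr hr * pAr ar cl cr hr) := by
    intro hl hr cl cr al ar
    simp only [hp, ← Finset.mul_sum, hYsum]
    ring
  have e1 : ∀ hl hr cl cr ar, ∑ al, ∑ yl', ∑ yr', p hl hr cl cr al ar yl' yr' =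
      (pHl hl * pCl cl hl) * (pHr hr * pCr cr hr * pAr ar cl cr hr) := by
    intro hl hr cl cr ar
    simp only [e0, ← Finset.mul_sum, ← Finset.sum_mul, hAlsum, mul_one]
  have e2 : ∀ hl hr cl cr, ∑ al, ∑ ar, ∑ yl', ∑ yr', p hl hr cl cr al ar yl' yr' =
      (pHl hl * pCl cl hl) * (pHr hr * pCr cr hr) := by
    intro hl hr cl cr
    simp only [e0, ← Finset.mul_sum, ← Finset.sum_mul, hAlsum, hArsum, mul_one]
  have e3 : ∀ hl hr cl, ∑ cr, ∑ al, ∑ ar, ∑ yl', ∑ yr', p hl hr cl cr al ar yl' yr' =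
      (pHl hl * pCl cl hl) * pHr hr := by
    intro hl hr cl
    simp only [e2, ← Finset.mul_sum, hCrsum, mul_one]
  have e4 : ∀ hl hr cr, ∑ cl, ∑ al, ∑ ar, ∑ yl', ∑ yr', p hl hr cl cr al ar yl' yr' =
      pHl hl * (pHr hr * pCr cr hr) := by
    intro hl hr cr
    simp only [e2, ← Finset.mul_sum, ← Finset.sum_mul, hClsum, mul_one]
  have e5 : ∀ cl cr al ar yl yr, ∑ hl, ∑ hr, p hl hr cl cr al ar yl yr =
      (∑ hl, pHl hl * pCl cl hl * pAl al cl cr hl) *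
        (∑ hr, pHr hr * pCr cr hr * pAr ar cl cr hr) * pY yl yr cl cr al ar := by
    intro cl cr al ar yl yr
    rw [← fac]
    simp only [Finset.sum_mul]
    refine Finset.sum_congr rfl fun hl _ => Finset.sum_congr rfl fun hr _ => ?_
    rw [hp]; ring
  rw [sum_swap_aux]
  refine Finset.sum_congr rfl fun cl _ => Finset.sum_congr rfl fun cr _ =>
    Finset.sum_congr rfl fun ar _ => Finset.sum_congr rfl fun yr _ => ?_
  have e6 : ∑ hl, ∑ hr, pHl hl * pHr hr * pCl cl hl * pCr cr hr * pAr ar cl cr hr *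
      pY yl yr cl cr (f cl cr) ar = (∑ hl, pHl hl * pCl cl hl) *
        (∑ hr, pHr hr * pCr cr hr * pAr ar cl cr hr) * pY yl yr cl cr (f cl cr) ar := by
    rw [← fac]
    simp only [Finset.sum_mul]
    refine Finset.sum_congr rfl fun hl _ => Finset.sum_congr rfl fun hr _ => ?_
    ring
  rw [e6, e5]
  simp only [e3, e4]
  simp only [e2]
  simp only [e1]
  simp only [e0]
  simp only [fac, hHlsum, hHrsum, mul_one, one_mul]
  have pos {T : Type} [Fintype T] [Nonempty T] (g : T → ℝ) (h : ∀ t, 0 < g t) : ∑ t, g t ≠ 0 :=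
    (Finset.sum_pos (fun t _ => h t) Finset.univ_nonempty).ne'
  have n1 := pos _ fun hl => mul_pos (hHlpos hl) (hClpos cl hl)
  have n2 := pos _ fun hr => mul_pos (hHrpos hr) (hCrpos cr hr)
  have n3 := pos _ fun hl => mul_pos (mul_pos (hHlpos hl) (hClpos cl hl))
    (hAlpos (f cl cr) cl cr hl)
  have n4 := pos _ fun hr => mul_pos (mul_pos (hHrpos hr) (hCrpos cr hr)) (hArpos ar cl cr hr)
  generalize (∑ hl, pHl hl * pCl cl hl) = a at *
  generalize (∑ hr, pHr hr * pCr cr hr) = b at *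
  generalize (∑ hl, pHl hl * pCl cl hl * pAl (f cl cr) cl cr hl) = c at *
  generalize (∑ hr, pHr hr * pCr cr hr * pAr ar cl cr hr) = d at *
  field_simp
end
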